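/- arXiv:2309.05619 — 4 statements merged into one kernel-verified Lean document; each statement's English description precedes it below -/
import Mathlib

section
/- Suppose the pair of random parameters (Θ₁, Θ₂) is independent of (X, Y), Θ₁ and Θ₂ are independent and identically distributed, and the ensemble is class-wise calibrated, i.e. for every class k ∈ K the conditional expectation E[1{Y = k} | p_k(X)] = p_k(X) almost surely, where p_k(x) = ℙ[c(Θ₁, x) = k]. Then the expected disagreement equals the expected test error: ℙ[c(Θ₁, X) ≠ c(Θ₂, X)] = ℙ[c(Θ₁, X) ≠ Y]. -/
open MeasureTheory ProbabilityTheory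

lemma indep_fubini_aux {Ω A B : Type*} [MeasurableSpace Ω] [MeasurableSpace A] [MeasurableSpace B]
    (μ : Measure Ω) [IsProbabilityMeasure μ] (W : Ω → A) (Z : Ω → B)
    (hW : Measurable W) (hZ : Measurable Z) (h : IndepFun W Z μ)
    (S : Set (A × B)) (hS : MeasurableSet S) :
    μ {ω | (W ω, Z ω) ∈ S} = ∫⁻ ω, μ {ω' | (W ω', Z ω) ∈ S} ∂μ := by
  have h1 := (indepFun_iff_map_prod_eq_prod_map_map hW.aemeasurable hZ.aemeasurable).1 h
  haveI : IsProbabilityMeasure (μ.map W) := Measure.isProbabilityMeasure_map hW.aemeasurable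
  haveI : IsProbabilityMeasure (μ.map Z) := Measure.isProbabilityMeasure_map hZ.aemeasurable
  have h2 : μ {ω | (W ω, Z ω) ∈ S} = (μ.map (fun ω => (W ω, Z ω))) S := by
    rw [Measure.map_apply (hW.prodMk hZ) hS]; rfl
  rw [h2, h1, Measure.prod_apply_symm hS,
    lintegral_map (measurable_measure_prodMk_right hS) hZ]
  refine lintegral_congr fun ω => ?_
  rw [Measure.map_apply hW (measurable_prodMk_right hS)]
  rfl

/-- Theorem 1 of Jiang et al.: if the pair of random parameters `(Θ₁, Θ₂)` is independent
of `(X, Y)`, `Θ₁` and `Θ₂` are i.i.d., and the ensemble is class-wise calibrated, then the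
expected disagreement equals the expected test error. -/
theorem expected_disagreement_eq_expected_test_error
    {Ω 𝒳 Θ K : Type*} [MeasurableSpace Ω] [MeasurableSpace 𝒳] [MeasurableSpace Θ]
    [MeasurableSpace K] [MeasurableSingletonClass K] [Fintype K] [Nonempty K] [DecidableEq K]
    (μ : Measure Ω) [IsProbabilityMeasure μ]
    (X : Ω → 𝒳) (Y : Ω → K) (c : Θ × 𝒳 → K) (T₁ T₂ : Ω → Θ)
    (hX : Measurable X) (hY : Measurable Y) (hc : Measurable c)
    (hT₁ : Measurable T₁) (hT₂ : Measurable T₂)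
    (p : K → 𝒳 → ℝ)
    (hp : ∀ k x, p k x = (μ {ω | c (T₁ ω, x) = k}).toReal)
    -- (Θ₁, Θ₂) is independent of (X, Y)
    (hIndep : IndepFun (fun ω => (T₁ ω, T₂ ω)) (fun ω => (X ω, Y ω)) μ)
    -- Θ₁ and Θ₂ are independent
    (hTT : IndepFun T₁ T₂ μ)
    -- Θ₁ and Θ₂ are identically distributed
    (hId : IdentDistrib T₁ T₂ μ μ)
    -- class-wise calibration: E[1{Y = k} | p_k(X)] = p_k(X) a.s. for every class k
    (hCal : ∀ k : K,
      μ[(fun ω => if Y ω = k then (1 : ℝ) else 0) |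
        MeasurableSpace.comap (fun ω => p k (X ω)) inferInstance]
        =ᵐ[μ] fun ω => p k (X ω)) :
    μ {ω | c (T₁ ω, X ω) ≠ c (T₂ ω, X ω)} = μ {ω | c (T₁ ω, X ω) ≠ Y ω} := by
  have hmk : ∀ k : K, MeasurableSet {k} := fun k => measurableSet_singleton k
  -- the sections
  have hq : ∀ k x, μ {ω | c (T₁ ω, x) = k} = ENNReal.ofReal (p k x) := by
    intro k x
    rw [hp, ENNReal.ofReal_toReal (measure_ne_top _ _)]
  have hp0 : ∀ k x, 0 ≤ p k x := fun k x => by rw [hp]; exact ENNReal.toReal_nonneg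
  have hp1 : ∀ k x, p k x ≤ 1 := fun k x => by
    rw [hp]; exact measureReal_le_one
  have hpm : ∀ k, Measurable (p k) := by
    intro k
    have hS : MeasurableSet {z : Θ × 𝒳 | c z = k} := hc (hmk k)
    haveI : IsProbabilityMeasure (μ.map T₁) := Measure.isProbabilityMeasure_map hT₁.aemeasurable
    have := (measurable_measure_prodMk_right (μ := μ.map T₁) hS).ennreal_toReal
    convert this using 2 with x
    rw [hp, Measure.map_apply hT₁ (measurable_prodMk_right hS)]
    rfl
  have hq2 : ∀ k x, μ {ω | c (T₂ ω, x) = k} = ENNReal.ofReal (p k x) := by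
    intro k x
    rw [← hq]
    have hS : MeasurableSet {t : Θ | c (t, x) = k} := (hc.comp measurable_prodMk_right) (hmk k)
    exact (hId.measure_mem_eq hS).symm
  have hpi : ∀ k, Integrable (fun ω => p k (X ω)) μ := fun k =>
    Integrable.of_bound ((hpm k).comp hX).aestronglyMeasurable 1
      (Filter.Eventually.of_forall fun ω => by
        rw [Real.norm_eq_abs, abs_of_nonneg (hp0 _ _)]; exact hp1 _ _)
  have key : ∀ k, μ {ω | c (T₁ ω, X ω) = k ∧ c (T₂ ω, X ω) = k}
      = μ {ω | c (T₁ ω, X ω) = k ∧ Y ω = k} := by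
    intro k
    have m1 : Measurable fun z : (Θ × Θ) × (𝒳 × K) => c (z.1.1, z.2.1) :=
      hc.comp (by fun_prop)
    have m2 : Measurable fun z : (Θ × Θ) × (𝒳 × K) => c (z.1.2, z.2.1) :=
      hc.comp (by fun_prop)
    have m3 : Measurable fun z : (Θ × Θ) × (𝒳 × K) => z.2.2 := by fun_prop
    have e1 := indep_fubini_aux μ _ _ (hT₁.prodMk hT₂) (hX.prodMk hY) hIndep
      {z | c (z.1.1, z.2.1) = k ∧ c (z.1.2, z.2.1) = k} ((m1 (hmk k)).inter (m2 (hmk k)))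
    have e2 := indep_fubini_aux μ _ _ (hT₁.prodMk hT₂) (hX.prodMk hY) hIndep
      {z | c (z.1.1, z.2.1) = k ∧ z.2.2 = k} ((m1 (hmk k)).inter (m3 (hmk k)))
    simp only [Set.mem_setOf_eq] at e1 e2
    rw [e1, e2]
    have f1 : ∀ ω, μ {ω' | c (T₁ ω', X ω) = k ∧ c (T₂ ω', X ω) = k}
        = ENNReal.ofReal (p k (X ω) * p k (X ω)) := by
      intro ω
      have hS : MeasurableSet {t : Θ | c (t, X ω) = k} :=
        (hc.comp measurable_prodMk_right) (hmk k)
      rw [ENNReal.ofReal_mul (hp0 _ _)]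
      nth_rewrite 1 [← hq]
      rw [← hq2]
      exact hTT.measure_inter_preimage_eq_mul _ _ hS hS
    have f2 : ∀ ω, μ {ω' | c (T₁ ω', X ω) = k ∧ Y ω = k}
        = ENNReal.ofReal (p k (X ω) * (if Y ω = k then (1 : ℝ) else 0)) := by
      intro ω
      by_cases h : Y ω = k
      · simp [h, hq]
      · simp [h]
    simp_rw [f1, f2]
    set g : Ω → ℝ := fun ω => if Y ω = k then (1 : ℝ) else 0 with hg
    have hgm : Measurable g := Measurable.ite (hY (hmk k)) measurable_const measurable_const
    have hg0 : ∀ ω, 0 ≤ g ω := fun ω => by simp only [hg]; split_ifs <;> norm_num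
    have hg1 : ∀ ω, g ω ≤ 1 := fun ω => by simp only [hg]; split_ifs <;> norm_num
    have hgi : Integrable g μ := Integrable.of_bound hgm.aestronglyMeasurable 1
      (Filter.Eventually.of_forall fun ω => by
        rw [Real.norm_eq_abs, abs_of_nonneg (hg0 _)]; exact hg1 _)
    have hbd : ∀ᵐ ω ∂μ, ‖p k (X ω)‖ ≤ 1 := Filter.Eventually.of_forall fun ω => by
        rw [Real.norm_eq_abs, abs_of_nonneg (hp0 _ _)]; exact hp1 _ _
    have i1 : Integrable (fun ω => p k (X ω) * p k (X ω)) μ :=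
      (hpi k).bdd_mul ((hpm k).comp hX).aestronglyMeasurable hbd
    have i2 : Integrable (fun ω => p k (X ω) * g ω) μ :=
      hgi.bdd_mul ((hpm k).comp hX).aestronglyMeasurable hbd
    rw [← ofReal_integral_eq_lintegral_ofReal i1
        (Filter.Eventually.of_forall fun ω => mul_nonneg (hp0 _ _) (hp0 _ _)),
      ← ofReal_integral_eq_lintegral_ofReal i2
        (Filter.Eventually.of_forall fun ω => mul_nonneg (hp0 _ _) (hg0 _))]
    congr 1
    have hle : MeasurableSpace.comap (fun ω => p k (X ω)) inferInstance ≤ ‹MeasurableSpace Ω› :=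
      ((hpm k).comp hX).comap_le
    have hsm : StronglyMeasurable[MeasurableSpace.comap (fun ω => p k (X ω)) inferInstance]
        (fun ω => p k (X ω)) :=
      (comap_measurable (fun ω => p k (X ω))).stronglyMeasurable
    have hpull := condExp_mul_of_stronglyMeasurable_left (μ := μ) hsm i2 hgi
    rw [← integral_condExp hle (f := fun ω => p k (X ω) * g ω)]
    refine integral_congr_ae ?_
    filter_upwards [hpull, hCal k] with ω h1 h2
    refine Eq.trans ?_ h1.symm
    simp only [Pi.mul_apply]
    rw [h2]
  have mc1 : Measurable fun ω => c (T₁ ω, X ω) := hc.comp (hT₁.prodMk hX)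
  have mc2 : Measurable fun ω => c (T₂ ω, X ω) := hc.comp (hT₂.prodMk hX)
  have dec : ∀ f g : Ω → K, Measurable f → Measurable g →
      MeasurableSet {ω | f ω = g ω} ∧
      μ {ω | f ω = g ω} = ∑' k, μ {ω | f ω = k ∧ g ω = k} := by
    intro f g hf hg
    have hU : {ω | f ω = g ω} = ⋃ k, {ω | f ω = k ∧ g ω = k} := by
      ext ω; simp [eq_comm]
    have hm : ∀ k, MeasurableSet {ω | f ω = k ∧ g ω = k} := fun k =>
      (hf (hmk k)).inter (hg (hmk k))
    rw [hU]
    refine ⟨MeasurableSet.iUnion hm, measure_iUnion ?_ hm⟩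
    intro i j hij
    refine Set.disjoint_left.2 fun ω h1 h2 => hij (h1.1.symm.trans h2.1)
  obtain ⟨a1, a2⟩ := dec _ _ mc1 mc2
  obtain ⟨b1, b2⟩ := dec _ _ mc1 hY
  have r1 := prob_compl_eq_one_sub (μ := μ) a1
  have r2 := prob_compl_eq_one_sub (μ := μ) b1
  rw [a2] at r1
  rw [b2] at r2
  simp_rw [key] at r1
  exact r1.trans r2.symm
end

section
/- If the random parameter Θ₁ is independent of the pair (X, Y), then the expected test error satisfies ℙ[c(Θ₁, X) ≠ Y] = 1 − Σ_{k ∈ K} E[1{Y = k} · p_k(X)], where p_k(x) = ℙ[c(Θ₁, x) = k]. -/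
open MeasureTheory ProbabilityTheory

/-- If the random parameter `Θ₁` is independent of the pair `(X, Y)`, then the expected
test error satisfies `ℙ[c(Θ₁, X) ≠ Y] = 1 - ∑ k, E[1{Y = k} · p k (X)]`. -/
theorem expected_test_error_eq_one_sub_sum
    {Ω 𝒳 Θ K : Type*} [MeasurableSpace Ω] [MeasurableSpace 𝒳] [MeasurableSpace Θ]
    [MeasurableSpace K] [MeasurableSingletonClass K] [Fintype K] [Nonempty K] [DecidableEq K]
    (μ : Measure Ω) [IsProbabilityMeasure μ]
    (X : Ω → 𝒳) (Y : Ω → K) (c : Θ × 𝒳 → K) (T₁ : Ω → Θ)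
    (hX : Measurable X) (hY : Measurable Y) (hc : Measurable c) (hT₁ : Measurable T₁)
    (p : K → 𝒳 → ℝ)
    (hp : ∀ k x, p k x = (μ {ω | c (T₁ ω, x) = k}).toReal)
    -- Θ₁ is independent of (X, Y)
    (hIndep : IndepFun T₁ (fun ω => (X ω, Y ω)) μ) :
    (μ {ω | c (T₁ ω, X ω) ≠ Y ω}).toReal =
      1 - ∑ k : K, ∫ ω, (if Y ω = k then (1 : ℝ) else 0) * p k (X ω) ∂μ := by
  have hcX : Measurable (fun ω => c (T₁ ω, X ω)) := hc.comp (hT₁.prodMk hX)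
  have hXY : Measurable (fun ω => (X ω, Y ω)) := hX.prodMk hY
  have hE : MeasurableSet {ω | c (T₁ ω, X ω) = Y ω} := measurableSet_eq_fun hcX hY
  have : IsProbabilityMeasure (μ.map T₁) := Measure.isProbabilityMeasure_map hT₁.aemeasurable
  have hcx : ∀ x, Measurable (fun t => c (t, x)) := fun x => hc.comp measurable_prodMk_right
  have hmp : ∀ k, Measurable (p k) := by
    intro k
    have h := (measurable_measure_prodMk_right (μ := μ.map T₁)
      (hc (measurableSet_singleton k))).ennreal_toReal
    convert h using 1
    ext x
    rw [hp, Measure.map_apply hT₁ (measurable_prodMk_right (hc (measurableSet_singleton k)))]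
    rfl
  have hle : ∀ k x, p k x ≤ 1 := fun k x => by
    rw [hp]; exact measureReal_le_one
  have hnn : ∀ k x, 0 ≤ p k x := fun k x => by
    rw [hp]; exact ENNReal.toReal_nonneg
  have hint : ∀ k, Integrable (fun ω => (if Y ω = k then (1 : ℝ) else 0) * p k (X ω)) μ := by
    intro k
    refine Integrable.of_bound (C := 1) ?_ (Filter.Eventually.of_forall fun ω => ?_)
    · exact ((Measurable.ite (hY (measurableSet_singleton k)) measurable_const
        measurable_const).mul ((hmp k).comp hX)).aestronglyMeasurable
    · have h1 := hle k (X ω)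
      have h0 := hnn k (X ω)
      split_ifs <;> simp [abs_of_nonneg h0, h1]
  rw [← integral_finset_sum _ (fun k _ => hint k)]
  have hsum : ∀ ω, ∑ k : K, (if Y ω = k then (1 : ℝ) else 0) * p k (X ω) = p (Y ω) (X ω) := by
    intro ω
    simp
  simp_rw [hsum]
  have hA : MeasurableSet {q : Θ × (𝒳 × K) | c (q.1, q.2.1) = q.2.2} :=
    measurableSet_eq_fun (hc.comp (measurable_fst.prodMk (measurable_fst.comp measurable_snd)))
      (measurable_snd.comp measurable_snd)
  have hmain : μ {ω | c (T₁ ω, X ω) = Y ω} = ∫⁻ ω, μ {ω' | c (T₁ ω', X ω) = Y ω} ∂μ := by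
    have h1 := (indepFun_iff_map_prod_eq_prod_map_map hT₁.aemeasurable hXY.aemeasurable).1 hIndep
    have h2 : μ {ω | c (T₁ ω, X ω) = Y ω} = μ.map (fun ω => (T₁ ω, (X ω, Y ω)))
        {q : Θ × (𝒳 × K) | c (q.1, q.2.1) = q.2.2} := by
      rw [Measure.map_apply (hT₁.prodMk hXY) hA]; rfl
    have : IsProbabilityMeasure (μ.map (fun ω => (X ω, Y ω))) :=
      Measure.isProbabilityMeasure_map hXY.aemeasurable
    rw [h2, h1, Measure.prod_apply_symm hA,
      lintegral_map (measurable_measure_prodMk_right hA) hXY]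
    refine lintegral_congr fun ω => ?_
    rw [Measure.map_apply hT₁ (measurable_prodMk_right hA)]
    rfl
  have hmeas : AEStronglyMeasurable (fun ω => p (Y ω) (X ω)) μ := by
    have h := (integrable_finset_sum Finset.univ (fun k _ => hint k)).aestronglyMeasurable
    simpa [hsum] using h
  have hI : ∫ ω, p (Y ω) (X ω) ∂μ = (μ {ω | c (T₁ ω, X ω) = Y ω}).toReal := by
    rw [hmain, integral_eq_lintegral_of_nonneg_ae
      (Filter.Eventually.of_forall fun ω => hnn _ _) hmeas]
    congr 1
    refine lintegral_congr fun ω => ?_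
    rw [hp, ENNReal.ofReal_toReal (measure_ne_top _ _)]
  rw [hI]
  exact probReal_compl_eq_one_sub hE
end

section
/- If the pair of random parameters (Θ₁, Θ₂) is independent of (X, Y), and Θ₁ and Θ₂ are independent and identically distributed, then the expected disagreement satisfies ℙ[c(Θ₁, X) ≠ c(Θ₂, X)] = 1 − Σ_{k ∈ K} E[p_k(X)²], where p_k(x) = ℙ[c(Θ₁, x) = k]. -/
open MeasureTheory ProbabilityTheory

/-- If the pair `(Θ₁, Θ₂)` is independent of `(X, Y)` and `Θ₁`, `Θ₂` are i.i.d., then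
the expected disagreement satisfies `ℙ[c(Θ₁, X) ≠ c(Θ₂, X)] = 1 - ∑ k, E[p k (X) ^ 2]`. -/
theorem expected_disagreement_eq_one_sub_sum_sq
    {Ω 𝒳 Θ K : Type*} [MeasurableSpace Ω] [MeasurableSpace 𝒳] [MeasurableSpace Θ]
    [MeasurableSpace K] [MeasurableSingletonClass K] [Fintype K] [Nonempty K]
    (μ : Measure Ω) [IsProbabilityMeasure μ]
    (X : Ω → 𝒳) (Y : Ω → K) (c : Θ × 𝒳 → K) (T₁ T₂ : Ω → Θ)
    (hX : Measurable X) (hY : Measurable Y) (hc : Measurable c)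
    (hT₁ : Measurable T₁) (hT₂ : Measurable T₂)
    (p : K → 𝒳 → ℝ)
    (hp : ∀ k x, p k x = (μ {ω | c (T₁ ω, x) = k}).toReal)
    -- (Θ₁, Θ₂) is independent of (X, Y)
    (hIndep : IndepFun (fun ω => (T₁ ω, T₂ ω)) (fun ω => (X ω, Y ω)) μ)
    -- Θ₁ and Θ₂ are independent
    (hTT : IndepFun T₁ T₂ μ)
    -- Θ₁ and Θ₂ are identically distributed
    (hId : IdentDistrib T₁ T₂ μ μ) :
    (μ {ω | c (T₁ ω, X ω) ≠ c (T₂ ω, X ω)}).toReal =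
      1 - ∑ k : K, ∫ ω, (p k (X ω)) ^ 2 ∂μ := by
  classical
  have hXT : IndepFun X (fun ω => (T₁ ω, T₂ ω)) μ :=
    (hIndep.comp measurable_id measurable_fst).symm
  have hT : Measurable (fun ω => (T₁ ω, T₂ ω)) := hT₁.prodMk hT₂
  have hlaw : μ.map (fun ω => (X ω, (T₁ ω, T₂ ω))) =
      (μ.map X).prod (μ.map (fun ω => (T₁ ω, T₂ ω))) :=
    (indepFun_iff_map_prod_eq_prod_map_map hX.aemeasurable hT.aemeasurable).1 hXT
  have hPX : IsProbabilityMeasure (μ.map X) := Measure.isProbabilityMeasure_map hX.aemeasurable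
  have hPT : IsProbabilityMeasure (μ.map T₁) := Measure.isProbabilityMeasure_map hT₁.aemeasurable
  have hPTT : IsProbabilityMeasure (μ.map (fun ω => (T₁ ω, T₂ ω))) :=
    Measure.isProbabilityMeasure_map hT.aemeasurable
  have hsec : ∀ k x, MeasurableSet {t | c (t, x) = k} := fun k x =>
    (hc.comp (measurable_id.prodMk measurable_const)) (measurableSet_singleton k)
  have hmeas : ∀ k, Measurable (fun x => μ {ω | c (T₁ ω, x) = k}) := by
    intro k
    have h := measurable_measure_prodMk_right (μ := μ.map T₁) (hc (measurableSet_singleton k))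
    have e : (fun x => μ {ω | c (T₁ ω, x) = k}) =
        fun x => μ.map T₁ ((fun t => (t, x)) ⁻¹' (c ⁻¹' {k})) := by
      funext x
      exact (Measure.map_apply hT₁ (hsec k x)).symm
    rw [e]
    exact h
  have hm1 : ∀ k, MeasurableSet {ω | c (T₁ ω, X ω) = k} := fun k =>
    (hc.comp (hT₁.prodMk hX)) (measurableSet_singleton k)
  have hm2 : ∀ k, MeasurableSet {ω | c (T₂ ω, X ω) = k} := fun k =>
    (hc.comp (hT₂.prodMk hX)) (measurableSet_singleton k)
  have hmA : ∀ k, MeasurableSet {ω | c (T₁ ω, X ω) = k ∧ c (T₂ ω, X ω) = k} := fun k =>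
    (hm1 k).inter (hm2 k)
  have key : ∀ k, μ {ω | c (T₁ ω, X ω) = k ∧ c (T₂ ω, X ω) = k} =
      ∫⁻ ω, (μ {ω' | c (T₁ ω', X ω) = k}) ^ 2 ∂μ := by
    intro k
    have hS : MeasurableSet {z : 𝒳 × (Θ × Θ) | c (z.2.1, z.1) = k ∧ c (z.2.2, z.1) = k} :=
      ((hc.comp (measurable_snd.fst.prodMk measurable_fst)) (measurableSet_singleton k)).inter
        ((hc.comp (measurable_snd.snd.prodMk measurable_fst)) (measurableSet_singleton k))
    have h1 := Measure.map_apply (μ := μ) (hX.prodMk hT) hS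
    rw [hlaw, Measure.prod_apply hS] at h1
    rw [lintegral_map (measurable_measure_prodMk_left hS) hX] at h1
    refine Eq.trans h1.symm ?_
    refine lintegral_congr fun ω => ?_
    rw [Measure.map_apply hT (measurable_prodMk_left hS)]
    have h2 := hTT.measure_inter_preimage_eq_mul _ _ (hsec k (X ω)) (hsec k (X ω))
    have h3 := hId.measure_mem_eq (hsec k (X ω))
    rw [← h3] at h2
    rw [sq]
    exact h2
  have key2 : ∀ k, ∫ ω, (p k (X ω)) ^ 2 ∂μ =
      μ.real {ω | c (T₁ ω, X ω) = k ∧ c (T₂ ω, X ω) = k} := by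
    intro k
    rw [Measure.real, key k, ← integral_toReal]
    · refine integral_congr_ae (Filter.Eventually.of_forall fun ω => ?_)
      simp [hp]
    · exact (((hmeas k).comp hX).pow_const 2).aemeasurable
    · exact Filter.Eventually.of_forall fun ω => ENNReal.pow_lt_top (measure_lt_top _ _)
  simp_rw [key2]
  rw [← measureReal_biUnion_finset (fun i _ j _ hij => by
      refine Set.disjoint_left.2 fun ω h h' => hij ?_
      exact h.1.symm.trans h'.1) (fun k _ => hmA k),
    ← probReal_compl_eq_one_sub (Finset.measurableSet_biUnion _ fun k _ => hmA k)]
  change μ.real _ = _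
  congr 1
  ext ω
  simp [eq_comm]
end

section
/- Suppose the pair of random parameters (Θ₁, Θ₂) is independent of (X, Y), Θ₁ and Θ₂ are independent and identically distributed, and the ensemble is class-wise calibrated, i.e. for every class k ∈ K the conditional expectation E[1{Y = k} | p_k(X)] = p_k(X) almost surely, where p_k(x) = ℙ[c(Θ₁, x) = k]. Then the expected agreement equals the expected accuracy: ℙ[c(Θ₁, X) = c(Θ₂, X)] = ℙ[c(Θ₁, X) = Y]. -/
open MeasureTheory ProbabilityTheory

theorem aux_indep {Ω A B : Type*} [MeasurableSpace Ω] [MeasurableSpace A] [MeasurableSpace B]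
    (μ : Measure Ω) [IsProbabilityMeasure μ] (U : Ω → A) (V : Ω → B) (hU : Measurable U)
    (hV : Measurable V) (h : IndepFun U V μ) (S : Set (A × B)) (hS : MeasurableSet S) :
    μ {ω | (U ω, V ω) ∈ S} = ∫⁻ ω, μ {ω' | (U ω', V ω) ∈ S} ∂μ := by
  have h1 := (indepFun_iff_map_prod_eq_prod_map_map hU.aemeasurable hV.aemeasurable).1 h
  have := Measure.isProbabilityMeasure_map (μ := μ) hU.aemeasurable
  have := Measure.isProbabilityMeasure_map (μ := μ) hV.aemeasurable
  have h2 : μ {ω | (U ω, V ω) ∈ S} = (μ.map (fun ω => (U ω, V ω))) S := by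
    rw [Measure.map_apply (hU.prodMk hV) hS]; rfl
  rw [h2, h1, Measure.prod_apply_symm hS, lintegral_map (measurable_measure_prodMk_right hS) hV]
  refine lintegral_congr fun ω => ?_
  rw [Measure.map_apply hU (measurable_prodMk_right hS)]
  rfl

/-- If the pair of random parameters `(Θ₁, Θ₂)` is independent of `(X, Y)`, `Θ₁` and `Θ₂`
are i.i.d., and the ensemble is class-wise calibrated, then the expected agreement equals
the expected accuracy. -/
theorem expected_agreement_eq_expected_accuracy
    {Ω 𝒳 Θ K : Type*} [MeasurableSpace Ω] [MeasurableSpace 𝒳] [MeasurableSpace Θ]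
    [MeasurableSpace K] [MeasurableSingletonClass K] [Fintype K] [Nonempty K] [DecidableEq K]
    (μ : Measure Ω) [IsProbabilityMeasure μ]
    (X : Ω → 𝒳) (Y : Ω → K) (c : Θ × 𝒳 → K) (T₁ T₂ : Ω → Θ)
    (hX : Measurable X) (hY : Measurable Y) (hc : Measurable c)
    (hT₁ : Measurable T₁) (hT₂ : Measurable T₂)
    (p : K → 𝒳 → ℝ)
    (hp : ∀ k x, p k x = (μ {ω | c (T₁ ω, x) = k}).toReal)
    -- (Θ₁, Θ₂) is independent of (X, Y)
    (hIndep : IndepFun (fun ω => (T₁ ω, T₂ ω)) (fun ω => (X ω, Y ω)) μ)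
    -- Θ₁ and Θ₂ are independent
    (hTT : IndepFun T₁ T₂ μ)
    -- Θ₁ and Θ₂ are identically distributed
    (hId : IdentDistrib T₁ T₂ μ μ)
    -- class-wise calibration: E[1{Y = k} | p_k(X)] = p_k(X) a.s. for every class k
    (hCal : ∀ k : K,
      μ[(fun ω => if Y ω = k then (1 : ℝ) else 0) |
        MeasurableSpace.comap (fun ω => p k (X ω)) inferInstance]
        =ᵐ[μ] fun ω => p k (X ω)) :
    μ {ω | c (T₁ ω, X ω) = c (T₂ ω, X ω)} = μ {ω | c (T₁ ω, X ω) = Y ω} := by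
  have hpm : ∀ k, Measurable (p k) := by
    intro k
    have hS : MeasurableSet (c ⁻¹' {k}) := hc (measurableSet_singleton k)
    have := Measure.isProbabilityMeasure_map (μ := μ) hT₁.aemeasurable
    have h := (measurable_measure_prodMk_right (μ := μ.map T₁) hS).ennreal_toReal
    convert h using 1
    funext x
    rw [hp, Measure.map_apply hT₁ (measurable_prodMk_right hS)]
    rfl
  have hp0 : ∀ k x, 0 ≤ p k x := fun k x => by rw [hp]; exact ENNReal.toReal_nonneg
  have hp1 : ∀ k x, p k x ≤ 1 := fun k x => by
    rw [hp]; exact ENNReal.toReal_le_of_le_ofReal zero_le_one (by simpa using prob_le_one)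
  have hq : ∀ k x, μ {ω | c (T₁ ω, x) = k} = ENNReal.ofReal (p k x) := fun k x => by
    rw [hp, ENNReal.ofReal_toReal (measure_ne_top _ _)]
  have hcx : ∀ x, Measurable (fun t => c (t, x)) := fun x => hc.comp measurable_prodMk_right
  have hq2 : ∀ k x, μ {ω | c (T₂ ω, x) = k} = ENNReal.ofReal (p k x) := fun k x => by
    rw [← hq]
    exact ((hId.comp (hcx x)).measure_mem_eq (measurableSet_singleton k)).symm
  have hpair : ∀ k x, μ {ω | c (T₁ ω, x) = k ∧ c (T₂ ω, x) = k}
      = ENNReal.ofReal (p k x * p k x) := fun k x => by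
    have h := (hTT.comp (hcx x) (hcx x)).measure_inter_preimage_eq_mul _ _
      (measurableSet_singleton k) (measurableSet_singleton k)
    rw [ENNReal.ofReal_mul (hp0 k x)]
    nth_rewrite 1 [← hq]
    rw [← hq2]
    exact h
  have hXY : Measurable (fun ω => (X ω, Y ω)) := hX.prodMk hY
  have hTm : Measurable (fun ω => (T₁ ω, T₂ ω)) := hT₁.prodMk hT₂
  have hcm1 : Measurable (fun z : (Θ × Θ) × (𝒳 × K) => c (z.1.1, z.2.1)) :=
    hc.comp (by fun_prop)
  have hcm2 : Measurable (fun z : (Θ × Θ) × (𝒳 × K) => c (z.1.2, z.2.1)) :=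
    hc.comp (by fun_prop)
  have hym : Measurable (fun z : (Θ × Θ) × (𝒳 × K) => z.2.2) := by fun_prop
  have hA : ∀ k, μ {ω | c (T₁ ω, X ω) = k ∧ c (T₂ ω, X ω) = k}
      = ∫⁻ ω, ENNReal.ofReal (p k (X ω) * p k (X ω)) ∂μ := fun k => by
    have h := aux_indep μ _ _ hTm hXY hIndep
      {z | c (z.1.1, z.2.1) = k ∧ c (z.1.2, z.2.1) = k}
      ((hcm1 (measurableSet_singleton k)).inter (hcm2 (measurableSet_singleton k)))
    refine h.trans (lintegral_congr fun ω => hpair k (X ω))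
  have hB : ∀ k, μ {ω | c (T₁ ω, X ω) = k ∧ Y ω = k}
      = ∫⁻ ω, ENNReal.ofReal (p k (X ω) * (if Y ω = k then (1 : ℝ) else 0)) ∂μ := fun k => by
    have h := aux_indep μ _ _ hTm hXY hIndep
      {z | c (z.1.1, z.2.1) = k ∧ z.2.2 = k}
      ((hcm1 (measurableSet_singleton k)).inter (hym (measurableSet_singleton k)))
    refine h.trans (lintegral_congr fun ω => ?_)
    by_cases hk : Y ω = k
    · simp [hk, hq]
    · simp [hk]
  have hint : ∀ k, Integrable (fun ω => if Y ω = k then (1 : ℝ) else 0) μ := fun k => by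
    refine Integrable.of_bound (C := 1) ?_ (ae_of_all _ fun ω => ?_)
    · exact (Measurable.ite (hY (measurableSet_singleton k)) measurable_const
        measurable_const).aestronglyMeasurable
    · split_ifs <;> simp
  have hbd : ∀ k, ∀ᵐ ω ∂μ, ‖p k (X ω)‖ ≤ 1 := fun k => ae_of_all _ fun ω => by
    rw [Real.norm_eq_abs, abs_of_nonneg (hp0 _ _)]; exact hp1 _ _
  have hpX : ∀ k, Measurable (fun ω => p k (X ω)) := fun k => (hpm k).comp hX
  have hintp : ∀ k, Integrable (fun ω => p k (X ω)) μ := fun k =>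
    Integrable.of_bound (hpX k).aestronglyMeasurable 1 (hbd k)
  have hi1 : ∀ k, Integrable (fun ω => p k (X ω) * p k (X ω)) μ := fun k =>
    (hintp k).bdd_mul (hpX k).aestronglyMeasurable (hbd k)
  have hi2 : ∀ k, Integrable (fun ω => p k (X ω) * (if Y ω = k then (1 : ℝ) else 0)) μ :=
    fun k => (hint k).bdd_mul (hpX k).aestronglyMeasurable (hbd k)
  have hI : ∀ k, ∫ ω, p k (X ω) * p k (X ω) ∂μ
      = ∫ ω, p k (X ω) * (if Y ω = k then (1 : ℝ) else 0) ∂μ := fun k => by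
    have hm : MeasurableSpace.comap (fun ω => p k (X ω)) inferInstance ≤ ‹MeasurableSpace Ω› :=
      (hpX k).comap_le
    have hsm : StronglyMeasurable[MeasurableSpace.comap (fun ω => p k (X ω)) inferInstance]
        (fun ω => p k (X ω)) := (comap_measurable _).stronglyMeasurable
    have h := condExp_mul_of_stronglyMeasurable_left hsm (hi2 k) (hint k)
    rw [← integral_condExp hm (f := fun ω => p k (X ω) * (if Y ω = k then (1 : ℝ) else 0))]
    refine integral_congr_ae ?_
    filter_upwards [h, hCal k] with ω h1 h2
    refine Eq.trans ?_ h1.symm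
    rw [Pi.mul_apply, h2]
  have hAB : ∀ k, μ {ω | c (T₁ ω, X ω) = k ∧ c (T₂ ω, X ω) = k}
      = μ {ω | c (T₁ ω, X ω) = k ∧ Y ω = k} := fun k => by
    rw [hA, hB, ← ofReal_integral_eq_lintegral_ofReal (hi1 k)
      (ae_of_all _ fun ω => mul_nonneg (hp0 _ _) (hp0 _ _)),
      ← ofReal_integral_eq_lintegral_ofReal (hi2 k)
      (ae_of_all _ fun ω => mul_nonneg (hp0 _ _) (by split_ifs <;> simp)), hI]
  have hc1 : Measurable (fun ω => c (T₁ ω, X ω)) := hc.comp (hT₁.prodMk hX)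
  have hc2 : Measurable (fun ω => c (T₂ ω, X ω)) := hc.comp (hT₂.prodMk hX)
  have hsum : ∀ f g : Ω → K, Measurable f → Measurable g →
      μ {ω | f ω = g ω} = ∑ k, μ {ω | f ω = k ∧ g ω = k} := fun f g hf hg => by
    rw [← measure_biUnion_finset]
    · congr 1
      ext ω
      simp [eq_comm]
    · intro i _ j _ hij
      refine Set.disjoint_left.2 fun ω h1 h2 => hij (h1.1.symm.trans h2.1)
    · intro k _
      exact (hf (measurableSet_singleton k)).inter (hg (measurableSet_singleton k))
  rw [hsum _ _ hc1 hc2, hsum _ _ hc1 hY]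
  exact Finset.sum_congr rfl fun k _ => hAB k
end
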